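/- Let Γ be a finite simple graph. The centre of the right-angled Artin group A_Γ is the subgroup generated by the images of those vertices v that are adjacent to every other vertex of Γ. In particular, if no vertex of Γ is adjacent to every other vertex, then the centre of A_Γ is trivial. -/

import Mathlib

open scoped commutatorElement

/-- The set of relators of a right-angled Artin group: commutators of adjacent vertices. -/
def raagRels {V : Type*} (Γ : SimpleGraph V) : Set (FreeGroup V) :=
  {r | ∃ v w : V, Γ.Adj v w ∧ r = ⁅FreeGroup.of v, FreeGroup.of w⁆}

/-- The right-angled Artin group of a simple graph. -/
abbrev RAAG {V : Type*} (Γ : SimpleGraph V) : Type _ := PresentedGroup (raagRels Γ)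

/-!
For a vertex `v`, the group `RAAG Γ` is the HNN extension of `RAAG (Γ - v)` with stable letter `v`
acting trivially on the subgroup generated by the neighbours of `v`. If `v` has a non-neighbour,
this subgroup is proper. Comparing the reduced words of `h * g` and `g * h` for `h` in the base
group shows that whatever centralizes the base of an HNN extension over proper subgroups lies in
the base, so a central `g` is a product of generators other than `v`. As `g` involves only finitely
many generators, and `⟨S⟩ ∩ ⟨T⟩ = ⟨S ∩ T⟩` for sets of vertices `S` and `T`, the vertices with a
non-neighbour can be removed from the support of `g` altogether.
-/

section HNNExtension

open HNNExtension HNNExtension.NormalWord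

variable {G : Type*} [Group G] {A B : Subgroup G}

theorem exists_reducedWord_head_eq_and_prod_eq_mul_of (φ : A ≃* B) (w : ReducedWord G A B)
    (hw : w.toList ≠ []) (h : G) :
    ∃ w' : ReducedWord G A B, w'.head = w.head ∧ w'.prod φ = w.prod φ * of h := by
  obtain ⟨head, list, chain⟩ := w
  -- Reducedness puts no condition on the group element of the last letter.
  obtain ⟨init, ⟨u, a⟩, rfl⟩ := list.eq_nil_or_concat'.resolve_left hw
  refine ⟨⟨head, init ++ [(u, a * h)], ?_⟩, rfl, ?_⟩
  · simpa [List.isChain_append] using chain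
  · simp [ReducedWord.prod, mul_assoc]

theorem exists_reducedWord_prod_eq (φ : A ≃* B) (g : HNNExtension G A B φ) :
    ∃ w : ReducedWord G A B, w.prod φ = g := by
  obtain ⟨d⟩ := TransversalPair.nonempty G A B
  exact ⟨(NormalWord.equiv φ d g).toReducedWord, (NormalWord.equiv φ d).symm_apply_apply g⟩

theorem centralizer_range_hnnExtension_of_le (φ : A ≃* B) (hA : A ≠ ⊤) (hB : B ≠ ⊤) :
    Subgroup.centralizer ((of : G →* HNNExtension G A B φ).range : Set (HNNExtension G A B φ)) ≤
      (of : G →* HNNExtension G A B φ).range := by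
  intro g hg
  obtain ⟨w, rfl⟩ := exists_reducedWord_prod_eq φ g
  obtain hnil | hcons := eq_or_ne w.toList []
  · exact ⟨w.head, by simp [ReducedWord.prod, hnil]⟩
  exfalso
  let u := (w.toList.head hcons).1
  have hu : u ∈ w.toList.head?.map Prod.fst := by simp [u, List.head?_eq_some_head hcons]
  have conj_mem (h : G) : w.head⁻¹ * (h * w.head) ∈ toSubgroup A B (-u) := by
    obtain ⟨w', hhead, hprod⟩ := exists_reducedWord_head_eq_and_prod_eq_mul_of φ w hcons h⁻¹
    have hconj : w.prod φ = ReducedWord.prod φ { w' with head := h * w'.head } := by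
      calc w.prod φ = of h * (w.prod φ * of h⁻¹) := by
            rw [← mul_assoc, Subgroup.mem_centralizer_iff.1 hg (of h) ⟨h, rfl⟩, map_inv,
              mul_inv_cancel_right]
        _ = of h * w'.prod φ := by rw [hprod]
        _ = _ := by simp [ReducedWord.prod, mul_assoc]
    simpa only [hhead] using (ReducedWord.map_fst_eq_and_of_prod_eq φ hconj).2 u hu
  have htop : toSubgroup A B (-u) = ⊤ :=
    (Subgroup.eq_top_iff' _).2 fun x ↦ by simpa [mul_assoc] using conj_mem (w.head * x * w.head⁻¹)
  obtain hu' | hu' := Int.units_eq_one_or (-u) <;> rw [hu'] at htop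
  · exact hA htop
  · exact hB htop

end HNNExtension

namespace RAAG

variable {V W : Type*} {Γ : SimpleGraph V} {Δ : SimpleGraph W}

theorem commute_of_adj {v w : V} (h : Γ.Adj v w) :
    Commute (PresentedGroup.of v : RAAG Γ) (PresentedGroup.of w) := by
  have hrel : PresentedGroup.mk (raagRels Γ) ⁅FreeGroup.of v, FreeGroup.of w⁆ = 1 :=
    PresentedGroup.one_of_mem ⟨v, w, h, rfl⟩
  rwa [map_commutatorElement, commutatorElement_eq_one_iff_commute] at hrel

section Lift

variable {G : Type*} [Group G] (f : V → G) (hf : ∀ v w, Γ.Adj v w → Commute (f v) (f w))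

/-- The universal property of `RAAG Γ`: a map from the vertices to a group sending adjacent
vertices to commuting elements extends to a homomorphism. -/
def lift : RAAG Γ →* G :=
  PresentedGroup.toGroup (f := f) <| by
    rintro _ ⟨v, w, hvw, rfl⟩
    simpa only [map_commutatorElement, FreeGroup.lift_apply_of,
      commutatorElement_eq_one_iff_commute] using hf v w hvw

@[simp]
theorem lift_of (v : V) : lift f hf (PresentedGroup.of v) = f v :=
  PresentedGroup.toGroup.of _

end Lift

theorem of_ne_one (v : V) : (PresentedGroup.of v : RAAG Γ) ≠ 1 := by
  intro h
  have hdeg := congrArg (lift (fun _ ↦ Multiplicative.ofAdd (1 : ℤ)) fun _ _ _ ↦ Commute.all _ _) h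
  simp at hdeg

/-- The homomorphism of right-angled Artin groups induced by a graph homomorphism. -/
def map (f : Γ →g Δ) : RAAG Γ →* RAAG Δ :=
  lift (fun v ↦ PresentedGroup.of (f v)) fun _ _ h ↦ commute_of_adj (f.map_adj h)

@[simp]
theorem map_of (f : Γ →g Δ) (v : V) :
    map f (PresentedGroup.of v) = PresentedGroup.of (f v) :=
  lift_of _ _ v

variable (Γ) in
/-- The standard parabolic subgroup of `RAAG Γ` generated by a set of vertices. -/
def parabolic (S : Set V) : Subgroup (RAAG Γ) :=
  Subgroup.closure (PresentedGroup.of '' S)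

theorem of_mem_parabolic {S : Set V} {v : V} (hv : v ∈ S) :
    PresentedGroup.of v ∈ parabolic Γ S :=
  Subgroup.subset_closure ⟨v, hv, rfl⟩

theorem parabolic_mono {S T : Set V} (h : S ⊆ T) : parabolic Γ S ≤ parabolic Γ T :=
  Subgroup.closure_mono (Set.image_mono h)

theorem range_map_le_parabolic (f : Γ →g Δ) : (map f).range ≤ parabolic Δ (Set.range f) := by
  rintro _ ⟨g, rfl⟩
  refine PresentedGroup.generated_by _ ((parabolic Δ (Set.range f)).comap (map f)) (fun v ↦ ?_) g
  rw [Subgroup.mem_comap, map_of]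
  exact of_mem_parabolic ⟨v, rfl⟩

theorem exists_finset_mem_parabolic (g : RAAG Γ) : ∃ s : Finset V, g ∈ parabolic Γ s := by
  have hdir : Directed (· ≤ ·) fun s : Finset V ↦ parabolic Γ s :=
    Monotone.directed_le fun _ _ hst ↦ parabolic_mono hst
  refine (Subgroup.mem_iSup_of_directed hdir).1 ?_
  refine PresentedGroup.generated_by _ _ (fun v ↦ ?_) g
  exact Subgroup.mem_iSup_of_mem {v} (of_mem_parabolic (by simp))

section Retraction

variable (Γ) in
/-- The retraction of `RAAG Γ` onto `parabolic Γ S`, killing the generators outside `S`. It is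
encoded as an endomorphism of `RAAG Γ`. -/
noncomputable def retraction (S : Set V) : RAAG Γ →* RAAG Γ :=
  lift (S.mulIndicator PresentedGroup.of) fun v w h ↦ by
    by_cases hv : v ∈ S <;> by_cases hw : w ∈ S <;> simp [hv, hw, commute_of_adj h]

variable {S T : Set V} {v : V} {g : RAAG Γ}

theorem retraction_of_mem (hv : v ∈ S) :
    retraction Γ S (PresentedGroup.of v) = PresentedGroup.of v := by
  simp [retraction, hv]

theorem retraction_of_notMem (hv : v ∉ S) : retraction Γ S (PresentedGroup.of v) = 1 := by
  simp [retraction, hv]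

theorem retraction_eq_self (hg : g ∈ parabolic Γ S) : retraction Γ S g = g := by
  refine MonoidHom.eqOn_closure (f := retraction Γ S) (g := MonoidHom.id _) ?_ hg
  rintro _ ⟨v, hv, rfl⟩
  exact retraction_of_mem hv

theorem parabolic_le_comap_retraction :
    parabolic Γ S ≤ (parabolic Γ (S ∩ T)).comap (retraction Γ T) := by
  refine (Subgroup.closure_le _).2 ?_
  rintro _ ⟨v, hvS, rfl⟩
  rw [SetLike.mem_coe, Subgroup.mem_comap]
  by_cases hvT : v ∈ T
  · rw [retraction_of_mem hvT]
    exact of_mem_parabolic ⟨hvS, hvT⟩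
  · rw [retraction_of_notMem hvT]
    exact one_mem _

theorem parabolic_inf_parabolic : parabolic Γ S ⊓ parabolic Γ T = parabolic Γ (S ∩ T) := by
  refine le_antisymm ?_
    (le_inf (parabolic_mono Set.inter_subset_left) (parabolic_mono Set.inter_subset_right))
  rintro g ⟨hS, hT⟩
  rw [← retraction_eq_self hT]
  exact parabolic_le_comap_retraction hS

theorem of_mem_parabolic_iff : PresentedGroup.of v ∈ parabolic Γ S ↔ v ∈ S := by
  refine ⟨fun h ↦ by_contra fun hv ↦ of_ne_one (Γ := Γ) v ?_, of_mem_parabolic⟩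
  rw [← retraction_eq_self h, retraction_of_notMem hv]

end Retraction

section HNN

open HNNExtension

variable (Γ) (v : V)

/-- The inclusion of `Γ - v` into `Γ`, where `Γ - v` is the subgraph induced on `{v}ᶜ`. -/
abbrev inclusion : Γ.induce {v}ᶜ →g Γ :=
  (SimpleGraph.Embedding.induce {v}ᶜ).toHom

/-- The subgroup of `RAAG (Γ - v)` generated by the link of `v`, that is, by its neighbours. -/
def linkSubgroup : Subgroup (RAAG (Γ.induce {v}ᶜ)) :=
  parabolic _ (Subtype.val ⁻¹' Γ.neighborSet v)

/-- The HNN extension of `RAAG (Γ - v)` whose stable letter centralizes the link of `v`. -/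
abbrev LinkExtension : Type _ :=
  HNNExtension (RAAG (Γ.induce {v}ᶜ)) (linkSubgroup Γ v) (linkSubgroup Γ v) (MulEquiv.refl _)

variable {Γ v}

theorem of_mem_linkSubgroup_iff {w : ({v}ᶜ : Set V)} :
    PresentedGroup.of w ∈ linkSubgroup Γ v ↔ Γ.Adj v w :=
  of_mem_parabolic_iff

theorem commute_t_of_adj {w : ({v}ᶜ : Set V)} (h : Γ.Adj v w) :
    Commute (t : LinkExtension Γ v) (of (PresentedGroup.of w)) :=
  t_mul_of ⟨_, of_mem_linkSubgroup_iff.2 h⟩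

theorem commute_of_map_inclusion {a : RAAG (Γ.induce {v}ᶜ)} (ha : a ∈ linkSubgroup Γ v) :
    Commute (PresentedGroup.of v) (map (inclusion Γ v) a) := by
  have hle : linkSubgroup Γ v ≤
      (Subgroup.centralizer {PresentedGroup.of v}).comap (map (inclusion Γ v)) := by
    refine (Subgroup.closure_le _).2 ?_
    rintro _ ⟨w, hw, rfl⟩
    rw [SetLike.mem_coe, Subgroup.mem_comap, map_of, Subgroup.mem_centralizer_singleton_iff]
    exact (commute_of_adj hw).symm
  exact (Subgroup.mem_centralizer_singleton_iff.1 (hle ha)).symm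

variable (Γ v)

open Classical in
/-- The homomorphism to the HNN extension sending `v` to the stable letter. -/
noncomputable def toLinkExtension : RAAG Γ →* LinkExtension Γ v :=
  lift (fun w ↦ if hw : w = v then t else of (PresentedGroup.of ⟨w, hw⟩)) fun x y hxy ↦ by
    by_cases hx : x = v
    · subst hx
      simpa [hxy.ne'] using commute_t_of_adj (w := ⟨y, hxy.ne'⟩) hxy
    by_cases hy : y = v
    · subst hy
      simpa [hx] using (commute_t_of_adj (w := ⟨x, hx⟩) hxy.symm).symm
    · simpa [hx, hy] using (commute_of_adj (Γ := Γ.induce {v}ᶜ) (v := ⟨x, hx⟩) (w := ⟨y, hy⟩)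
        hxy).map of

/-- The homomorphism from the HNN extension sending the stable letter to `v`. -/
def ofLinkExtension : LinkExtension Γ v →* RAAG Γ :=
  HNNExtension.lift (map (inclusion Γ v)) (PresentedGroup.of v)
    fun a ↦ commute_of_map_inclusion a.2

variable {Γ v}

theorem toLinkExtension_of_self : toLinkExtension Γ v (PresentedGroup.of v) = t := by
  simp [toLinkExtension]

theorem toLinkExtension_of_ne {w : V} (hw : w ≠ v) :
    toLinkExtension Γ v (PresentedGroup.of w) = of (PresentedGroup.of ⟨w, hw⟩) := by
  simp [toLinkExtension, hw]

theorem ofLinkExtension_t : ofLinkExtension Γ v t = PresentedGroup.of v :=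
  lift_t _ _ _

theorem ofLinkExtension_of (h : RAAG (Γ.induce {v}ᶜ)) :
    ofLinkExtension Γ v (of h) = map (inclusion Γ v) h :=
  HNNExtension.lift_of _ _ _ h

theorem ofLinkExtension_comp_toLinkExtension :
    (ofLinkExtension Γ v).comp (toLinkExtension Γ v) = MonoidHom.id _ := by
  ext w
  rw [MonoidHom.comp_apply, MonoidHom.id_apply]
  obtain rfl | hw := eq_or_ne w v
  · rw [toLinkExtension_of_self, ofLinkExtension_t]
  · rw [toLinkExtension_of_ne hw, ofLinkExtension_of, map_of]
    rfl

theorem toLinkExtension_comp_ofLinkExtension :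
    (toLinkExtension Γ v).comp (ofLinkExtension Γ v) = MonoidHom.id _ := by
  refine hom_ext (PresentedGroup.ext fun w ↦ ?_) ?_
  · rw [MonoidHom.comp_apply, MonoidHom.comp_apply, ofLinkExtension_of, map_of]
    exact toLinkExtension_of_ne w.2
  · rw [MonoidHom.comp_apply, ofLinkExtension_t, toLinkExtension_of_self, MonoidHom.id_apply]

variable (Γ v) in
/-- `RAAG Γ` is the HNN extension of `RAAG (Γ - v)` over the link of `v`, with stable letter `v`. -/
noncomputable def equivLinkExtension : RAAG Γ ≃* LinkExtension Γ v :=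
  MonoidHom.toMulEquiv (toLinkExtension Γ v) (ofLinkExtension Γ v)
    ofLinkExtension_comp_toLinkExtension toLinkExtension_comp_ofLinkExtension

theorem equivLinkExtension_symm_of (h : RAAG (Γ.induce {v}ᶜ)) :
    (equivLinkExtension Γ v).symm (of h) = map (inclusion Γ v) h :=
  ofLinkExtension_of h

theorem linkSubgroup_ne_top (hv : ¬ Γ.IsUniversal v) : linkSubgroup Γ v ≠ ⊤ := by
  obtain ⟨u, hvu, hadj⟩ : ∃ u, v ≠ u ∧ ¬ Γ.Adj v u := by
    simpa [SimpleGraph.IsUniversal] using hv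
  intro htop
  have hmem : PresentedGroup.of ⟨u, hvu.symm⟩ ∈ linkSubgroup Γ v := htop ▸ Subgroup.mem_top _
  exact hadj (of_mem_linkSubgroup_iff.1 hmem)

theorem center_le_parabolic_compl_singleton (hv : ¬ Γ.IsUniversal v) :
    Subgroup.center (RAAG Γ) ≤ parabolic Γ {v}ᶜ := by
  intro g hg
  have hcentral : equivLinkExtension Γ v g ∈ Subgroup.center (LinkExtension Γ v) :=
    MulEquivClass.apply_mem_center (equivLinkExtension Γ v) hg
  obtain ⟨h, hh⟩ := centralizer_range_hnnExtension_of_le _ (linkSubgroup_ne_top hv)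
    (linkSubgroup_ne_top hv) (Subgroup.center_le_centralizer _ hcentral)
  have hg_eq : map (inclusion Γ v) h = g := by
    rw [← equivLinkExtension_symm_of, hh, MulEquiv.symm_apply_apply]
  have hrange : Set.range (inclusion Γ v) = {v}ᶜ := Subtype.range_val
  rw [← hrange]
  exact range_map_le_parabolic _ ⟨h, hg_eq⟩

end HNN

theorem parabolic_universalVerts_le_center :
    parabolic Γ Γ.universalVerts ≤ Subgroup.center (RAAG Γ) := by
  refine (Subgroup.closure_le _).2 ?_
  rintro _ ⟨v, hv, rfl⟩
  rw [SetLike.mem_coe, Subgroup.mem_center_iff]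
  intro g
  rw [← Subgroup.mem_centralizer_singleton_iff]
  refine PresentedGroup.generated_by _ _ (fun w ↦ ?_) g
  rw [Subgroup.mem_centralizer_singleton_iff]
  obtain rfl | hvw := eq_or_ne v w
  · rfl
  · exact (commute_of_adj (hv hvw)).symm

theorem center_inf_parabolic_le_parabolic_universalVerts (s : Finset V) :
    Subgroup.center (RAAG Γ) ⊓ parabolic Γ s ≤ parabolic Γ Γ.universalVerts := by
  classical
  induction s using Finset.strongInduction with
  | H s ih =>
    by_cases hs : (s : Set V) ⊆ Γ.universalVerts
    · exact inf_le_right.trans (parabolic_mono hs)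
    obtain ⟨v, hvs, hv⟩ := Set.not_subset.1 hs
    refine le_trans (le_inf inf_le_left ?_) (ih (s.erase v) (Finset.erase_ssubset hvs))
    calc Subgroup.center (RAAG Γ) ⊓ parabolic Γ s
        ≤ parabolic Γ {v}ᶜ ⊓ parabolic Γ s :=
          inf_le_inf_right _ (center_le_parabolic_compl_singleton hv)
      _ ≤ parabolic Γ ({v}ᶜ ∩ s) := parabolic_inf_parabolic.le
      _ ≤ parabolic Γ (s.erase v) := parabolic_mono fun w hw ↦ by simpa [and_comm] using hw

theorem center_eq_parabolic_universalVerts :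
    Subgroup.center (RAAG Γ) = parabolic Γ Γ.universalVerts := by
  refine le_antisymm (fun g hg ↦ ?_) parabolic_universalVerts_le_center
  obtain ⟨s, hs⟩ := exists_finset_mem_parabolic g
  exact center_inf_parabolic_le_parabolic_universalVerts s ⟨hg, hs⟩

end RAAG

theorem center_raag_eq_closure_of_dominating_vertices_general {V : Type*}
    (Γ : SimpleGraph V) :
    Subgroup.center (RAAG Γ) =
      Subgroup.closure {x : RAAG Γ | ∃ v : V, (∀ w : V, w ≠ v → Γ.Adj v w) ∧
        x = PresentedGroup.of (rels := raagRels Γ) v} ∧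
    ((¬ ∃ v : V, ∀ w : V, w ≠ v → Γ.Adj v w) → Subgroup.center (RAAG Γ) = ⊥) := by
  have huniv : {x : RAAG Γ | ∃ v : V, (∀ w : V, w ≠ v → Γ.Adj v w) ∧
      x = PresentedGroup.of v} = PresentedGroup.of '' Γ.universalVerts := by
    ext x
    simp [SimpleGraph.universalVerts, SimpleGraph.IsUniversal, eq_comm]
  rw [huniv]
  refine ⟨RAAG.center_eq_parabolic_universalVerts, fun hnone ↦ ?_⟩
  have hempty : Γ.universalVerts = ∅ :=
    Set.eq_empty_of_forall_notMem fun v hv ↦ hnone ⟨v, fun _ hw ↦ hv hw.symm⟩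
  rw [RAAG.center_eq_parabolic_universalVerts, hempty, RAAG.parabolic, Set.image_empty,
    Subgroup.closure_empty]

theorem center_raag_eq_closure_of_dominating_vertices {V : Type} [Fintype V]
    (Γ : SimpleGraph V) :
    Subgroup.center (RAAG Γ) =
      Subgroup.closure {x : RAAG Γ | ∃ v : V, (∀ w : V, w ≠ v → Γ.Adj v w) ∧
        x = PresentedGroup.of (rels := raagRels Γ) v} ∧
    ((¬ ∃ v : V, ∀ w : V, w ≠ v → Γ.Adj v w) → Subgroup.center (RAAG Γ) = ⊥) :=
  center_raag_eq_closure_of_dominating_vertices_general Γ
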